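/- arXiv:1006.0027 — 4 statements merged into one kernel-verified Lean document; each statement's English description precedes it below -/
import Mathlib

section
/- For every n ≥ 0, the following family is a ℂ-vector-space basis of L_n: all products ∏_{j=1}^{n} φ_j in which, for each j = 1,…,n independently, either φ_j = z_j^{ℓ_j} for some integer ℓ_j ≥ 0, or φ_j = (z_j − z_{i_j})^{k_j} for some index i_j < j and some integer k_j < 0. (For n = 0 the family consists of the single element 1.) -/
open MvPolynomial

/-- The field `ℂ(z_1,…,z_n)` of rational functions in `n` variables. -/
abbrev RatField (n : ℕ) : Type := FractionRing (MvPolynomial (Fin n) ℂ)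

/-- The variable `z_i`, viewed inside the rational function field. -/
noncomputable def Zvar (n : ℕ) (i : Fin n) : RatField n :=
  algebraMap (MvPolynomial (Fin n) ℂ) (RatField n) (X i)

/-- `L_n`: the ℂ-subalgebra of `ℂ(z_1,…,z_n)` generated by the variables `z_i`
together with the inverses `(z_i - z_j)⁻¹` for `i ≠ j` (local functions). -/
noncomputable def LocalFn (n : ℕ) : Subalgebra ℂ (RatField n) :=
  Algebra.adjoin ℂ
    (Set.range (Zvar n) ∪ {x | ∃ i j : Fin n, i ≠ j ∧ x = (Zvar n i - Zvar n j)⁻¹})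

/-- Index data for the basis: for each `j`, either a nonnegative exponent `ℓ_j`
(giving the factor `z_j ^ ℓ_j`), or a pair `(i_j, m_j)` with `i_j < j`
(giving the factor `(z_j - z_{i_j}) ^ (-(m_j + 1))`, a negative power). -/
def BasisIdx (n : ℕ) : Type := ∀ j : Fin n, ℕ ⊕ {p : Fin n × ℕ // p.1 < j}

/-- The basis element of `L_n` corresponding to an index `c`: the product over `j`
of `z_j ^ ℓ_j` or `(z_j - z_{i_j}) ^ (k_j)` with `k_j = -(m_j+1) < 0` as indicated by `c j`. -/
noncomputable def basisElem (n : ℕ) (c : BasisIdx n) : RatField n :=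
  ∏ j : Fin n,
    Sum.elim (fun ℓ : ℕ => Zvar n j ^ ℓ)
      (fun p : {p : Fin n × ℕ // p.1 < j} =>
        (Zvar n j - Zvar n p.1.1) ^ (-(p.1.2 + 1) : ℤ)) (c j)

/-!
Over `R = L_n`, the algebra `L_{n+1}` is `R[x, (x - a_i)⁻¹]`, where `x = z_{n+1}` is transcendental
over `R` and the differences of the points `a_i = z_i` are units of `R`. The partial fraction
decomposition in `x` therefore exists and is unique with coefficients in `R`, which makes `L_{n+1}`
a free `R`-module on the powers `x ^ ℓ` and the negative powers of the `x - a_i`. The basis of `L_n`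
is the product of these bases along the tower `L_0 ⊆ L_1 ⊆ ⋯ ⊆ L_n`.
-/

section PartialFraction

open scoped Polynomial

variable {R S ι : Type*} [CommRing R] [CommRing S] [Algebra R S] {a : ι → R} {x : S} {y : ι → S}

/-- The monomials of a partial fraction decomposition in `x`: the powers `x ^ ℓ` and, where `y i`
stands for the inverse of `x - a i`, the powers `y i ^ (m + 1)`. The shift keeps the constant
`1 = y i ^ 0` from occurring more than once. -/
def partialFraction (x : S) (y : ι → S) : ℕ ⊕ ι × ℕ → S :=
  Sum.elim (fun l => x ^ l) fun p => y p.1 ^ (p.2 + 1)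

theorem aeval_mem_span_partialFraction (f : R[X]) :
    Polynomial.aeval x f ∈ Submodule.span R (Set.range (partialFraction x y)) := by
  rw [Polynomial.aeval_eq_sum_range]
  exact sum_mem fun l _ => Submodule.smul_mem _ _ (Submodule.subset_span ⟨Sum.inl l, rfl⟩)

theorem aeval_mul_prod_pow_mem_span_partialFraction
    (ha : Pairwise fun i j => IsUnit (a i - a j)) (hy : ∀ i, y i * (x - algebraMap R S (a i)) = 1)
    (f : R[X]) (s : Finset ι) (e : ι → ℕ) :
    Polynomial.aeval x f * ∏ i ∈ s, y i ^ e i ∈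
      Submodule.span R (Set.range (partialFraction x y)) := by
  cases subsingleton_or_nontrivial R
  · have := Module.subsingleton R S
    rw [Subsingleton.elim (_ * _) (0 : S)]
    exact zero_mem _
  let : Algebra R[X] S := (Polynomial.aeval x).toAlgebra
  have algebraMap_eq (p : R[X]) : algebraMap R[X] S p = Polynomial.aeval x p := rfl
  obtain ⟨q, r, hr, h⟩ := Polynomial.mul_prod_pow_inverse_eq_quo_add_sum_rem_mul_pow_inverse
    (K := S) (s := s) f (fun i _ => Polynomial.monic_X_sub_C (a i))
    (fun i _ j _ hij => Polynomial.isCoprime_X_sub_C_of_isUnit_sub (ha hij)) e (gi := y)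
    (fun i _ => by simpa [algebraMap_eq] using hy i)
  simp only [algebraMap_eq] at h
  rw [h]
  refine add_mem (aeval_mem_span_partialFraction q) (sum_mem fun i hi => sum_mem fun j _ => ?_)
  have hdeg : (r i j).degree ≤ 0 :=
    Nat.WithBot.lt_one_iff_le_zero.mp ((hr i hi j).trans_eq (Polynomial.degree_X_sub_C _))
  rw [Polynomial.eq_C_of_degree_le_zero hdeg, Polynomial.aeval_C, ← Algebra.smul_def]
  exact Submodule.smul_mem _ _ (Submodule.subset_span ⟨Sum.inr (i, j), rfl⟩)

theorem adjoin_eq_span_partialFraction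
    (ha : Pairwise fun i j => IsUnit (a i - a j))
    (hy : ∀ i, y i * (x - algebraMap R S (a i)) = 1) :
    Subalgebra.toSubmodule (Algebra.adjoin R (insert x (Set.range y))) =
      Submodule.span R (Set.range (partialFraction x y)) := by
  apply le_antisymm
  · rw [Algebra.adjoin_eq_span, Submodule.span_le, Set.insert_eq, Submonoid.closure_union]
    intro u hu
    obtain ⟨_, hv, _, hw, rfl⟩ := Submonoid.mem_sup.mp hu
    obtain ⟨l, rfl⟩ := Submonoid.mem_closure_singleton.mp hv
    obtain ⟨e, rfl⟩ := Submonoid.mem_closure_range_iff.mp hw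
    simpa [Finsupp.prod] using
      aeval_mul_prod_pow_mem_span_partialFraction ha hy (Polynomial.X ^ l) e.support e
  · rw [Submodule.span_le]
    rintro _ ⟨l | p, rfl⟩
    · exact pow_mem (Algebra.subset_adjoin (Set.mem_insert x _)) l
    · have mem_adjoin : y p.1 ∈ Algebra.adjoin R (insert x (Set.range y)) :=
        Algebra.subset_adjoin (Or.inr ⟨p.1, rfl⟩)
      exact pow_mem mem_adjoin (p.2 + 1)

theorem eq_zero_of_aeval_add_sum_pow_eq_zero (hx : Transcendental R x)
    (ha : Pairwise fun i j => IsUnit (a i - a j)) (hy : ∀ i, y i * (x - algebraMap R S (a i)) = 1)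
    {q : R[X]} {s : Finset ι} {N : ℕ} {r : ι → ℕ → R}
    (h : Polynomial.aeval x q + ∑ i ∈ s, ∑ m ∈ Finset.range N, r i m • y i ^ (m + 1) = 0) :
    q = 0 ∧ ∀ i ∈ s, ∀ m < N, r i m = 0 := by
  nontriviality R
  let : Algebra R[X] S := (Polynomial.aeval x).toAlgebra
  have algebraMap_eq (p : R[X]) : algebraMap R[X] S p = Polynomial.aeval x p := rfl
  have : FaithfulSMul R[X] S :=
    (faithfulSMul_iff_algebraMap_injective _ _).mpr (transcendental_iff_injective.mp hx)
  obtain ⟨hq, hr⟩ := Polynomial.quo_add_sum_rem_mul_pow_inverse_unique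
    (K := S) (s := s) (n := fun _ => N) (gi := y) (fun i _ => Polynomial.monic_X_sub_C (a i))
    (fun i _ j _ hij => Polynomial.isCoprime_X_sub_C_of_isUnit_sub (ha hij))
    (fun i _ => by simpa [algebraMap_eq] using hy i)
    (q₁ := q) (q₂ := 0) (r₁ := fun i m => Polynomial.C (r i m)) (r₂ := 0)
    (fun i _ _ => by simpa using Polynomial.degree_C_lt) (fun i _ _ => by simp)
    (by simpa [algebraMap_eq, Algebra.smul_def, Finset.sum_range] using h)
  exact ⟨hq, fun i hi m hm => by simpa using congrFun (hr i hi) ⟨m, hm⟩⟩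

theorem exists_subset_disjSum_range_product_range (s : Finset (ℕ ⊕ ι × ℕ)) :
    ∃ (t : Finset ι) (N : ℕ), s ⊆ (Finset.range N).disjSum (t ×ˢ Finset.range N) := by
  classical
  obtain ⟨N, hN⟩ := (s.image (Sum.elim id Prod.snd)).exists_nat_subset_range
  refine ⟨s.toRight.image Prod.fst, N, fun d hd => ?_⟩
  have hlt := hN (Finset.mem_image_of_mem _ hd)
  rcases d with l | p
  · simpa using hlt
  · exact Finset.inr_mem_disjSum.mpr (Finset.mem_product.mpr
      ⟨Finset.mem_image_of_mem Prod.fst (Finset.mem_toRight.mpr hd), hlt⟩)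

theorem linearIndependent_partialFraction (hx : Transcendental R x)
    (ha : Pairwise fun i j => IsUnit (a i - a j))
    (hy : ∀ i, y i * (x - algebraMap R S (a i)) = 1) :
    LinearIndependent R (partialFraction x y) := by
  classical
  rw [linearIndependent_iff'']
  intro s g hg hsum
  obtain ⟨t, N, hs⟩ := exists_subset_disjSum_range_product_range s
  rw [Finset.sum_subset hs fun d _ hd => by rw [hg d hd, zero_smul], Finset.sum_disjSum,
    Finset.sum_product] at hsum
  obtain ⟨hq, hr⟩ := eq_zero_of_aeval_add_sum_pow_eq_zero hx ha hy
    (q := ∑ l ∈ Finset.range N, Polynomial.monomial l (g (Sum.inl l)))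
    (r := fun i m => g (Sum.inr (i, m)))
    (by simpa [partialFraction, Polynomial.aeval_monomial, ← Algebra.smul_def] using hsum)
  intro d
  by_cases hd : d ∈ s
  · rcases d with l | ⟨i, m⟩
    · have hl : l < N := by simpa using hs hd
      simpa [Polynomial.coeff_monomial, hl] using congrArg (Polynomial.coeff · l) hq
    · obtain ⟨hi, hm⟩ : i ∈ t ∧ m < N := by simpa using hs hd
      exact hr i hi m hm
  · exact hg d hd

end PartialFraction

theorem span_range_mul_eq_restrictScalars_span {R S ι κ : Type*} [CommSemiring R] [Semiring S]
    [Algebra R S] {A : Subalgebra R S} {b : ι → S}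
    (hb : Submodule.span R (Set.range b) = Subalgebra.toSubmodule A) (c : κ → S) :
    Submodule.span R (Set.range fun p : ι × κ => b p.1 * c p.2) =
      (Submodule.span A (Set.range c)).restrictScalars R := by
  have mem_A (i : ι) : b i ∈ A := hb.le (Submodule.subset_span ⟨i, rfl⟩)
  let b' : ι → A := fun i => ⟨b i, mem_A i⟩
  have span_b' : Submodule.span R (Set.range b') = ⊤ := by
    refine Submodule.map_injective_of_injective (f := A.val.toLinearMap) Subtype.val_injective ?_
    rw [Submodule.map_span, ← Set.range_comp, Submodule.map_top]
    exact hb.trans (congrArg Subalgebra.toSubmodule A.range_val.symm)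
  rw [← Submodule.span_smul_of_span_eq_top span_b', Set.range_smul_range]
  rfl

section LocalAlgebra

variable {k F : Type*} [CommRing k] [Field F] [Algebra k F]

variable (k) in
/-- The algebra of local functions in the elements `z i` of a field: `LocalFn n` is the case of the
variables of `ℂ(z_1,…,z_n)`. -/
def localAlgebra {ι : Type*} (z : ι → F) : Subalgebra k F :=
  Algebra.adjoin k (Set.range z ∪ {x | ∃ i j, i ≠ j ∧ x = (z i - z j)⁻¹})

/-- The product of powers of the `z j` and negative powers of the `z j - z i` prescribed by `c`:
`basisElem n` is the case of the variables of `ℂ(z_1,…,z_n)`. -/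
def localMonomial {n : ℕ} (z : Fin n → F) (c : BasisIdx n) : F :=
  ∏ j, Sum.elim (fun l : ℕ => z j ^ l)
    (fun p : {p : Fin n × ℕ // p.1 < j} => (z j - z p.1.1) ^ (-(p.1.2 + 1) : ℤ)) (c j)

section Generators

variable {ι : Type*} (z : ι → F)

theorem mem_localAlgebra (i : ι) : z i ∈ localAlgebra k z :=
  Algebra.subset_adjoin (Or.inl ⟨i, rfl⟩)

theorem inv_sub_mem_localAlgebra {i j : ι} (hij : i ≠ j) : (z i - z j)⁻¹ ∈ localAlgebra k z :=
  Algebra.subset_adjoin (Or.inr ⟨i, j, hij, rfl⟩)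

variable {z}

theorem localAlgebra_le {A : Subalgebra k F} (hz : ∀ i, z i ∈ A)
    (hinv : ∀ i j, i ≠ j → (z i - z j)⁻¹ ∈ A) : localAlgebra k z ≤ A := by
  refine Algebra.adjoin_le ?_
  rintro _ (⟨i, rfl⟩ | ⟨i, j, hij, rfl⟩)
  exacts [hz i, hinv i j hij]

theorem localAlgebra_of_isEmpty [IsEmpty ι] : localAlgebra k z = ⊥ :=
  le_bot_iff.mp (localAlgebra_le isEmptyElim isEmptyElim)

theorem pairwise_isUnit_sub_localAlgebra (hz : Function.Injective z) :
    Pairwise fun i j =>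
      IsUnit ((⟨z i, mem_localAlgebra z i⟩ : localAlgebra k z) - ⟨z j, mem_localAlgebra z j⟩) :=
  fun _ _ hij => IsUnit.of_mul_eq_one ⟨_, inv_sub_mem_localAlgebra z hij⟩
    (Subtype.ext (mul_inv_cancel₀ (sub_ne_zero.mpr (hz.ne hij))))

theorem transcendental_localAlgebra {x : F}
    (hx : Transcendental (Algebra.adjoin k (Set.range z)) x) :
    Transcendental (localAlgebra k z) x := by
  let A := Subalgebra.algebraicClosure (Algebra.adjoin k (Set.range z)) F
  have hz (i : ι) : z i ∈ A :=
    isAlgebraic_algebraMap (⟨z i, Algebra.subset_adjoin ⟨i, rfl⟩⟩ : Algebra.adjoin k (Set.range z))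
  have hle : localAlgebra k z ≤ A.restrictScalars k :=
    localAlgebra_le hz fun i j _ => IsAlgebraic.inv (sub_mem (hz i) (hz j))
  exact Transcendental.of_tower_top_of_subalgebra_le hle hx.subalgebraAlgebraicClosure

end Generators

variable {n : ℕ}

/-- The inverses of the differences `z_{n+1} - z_i`, which together with `z_{n+1}` generate
`L_{n+1}` over `L_n`. -/
def lastSubInv (z : Fin (n + 1) → F) (i : Fin n) : F :=
  (z (Fin.last n) - z i.castSucc)⁻¹

theorem lastSubInv_mul_sub {z : Fin (n + 1) → F} (hz : Function.Injective z) (i : Fin n) :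
    lastSubInv z i * (z (Fin.last n) - z i.castSucc) = 1 :=
  inv_mul_cancel₀ (sub_ne_zero.mpr (hz.ne (Fin.castSucc_lt_last i).ne'))

theorem localAlgebra_succ (z : Fin (n + 1) → F) :
    localAlgebra k z = (Algebra.adjoin (localAlgebra k (z ∘ Fin.castSucc))
      (insert (z (Fin.last n)) (Set.range (lastSubInv z)))).restrictScalars k := by
  rw [localAlgebra.eq_def _ (z ∘ Fin.castSucc), ← Algebra.adjoin_union_eq_adjoin_adjoin]
  apply le_antisymm
  · apply localAlgebra_le
    · intro i
      cases i using Fin.lastCases with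
      | last => exact Algebra.subset_adjoin (by simp)
      | cast i => exact Algebra.subset_adjoin (by simp)
    · intro i j hij
      cases i using Fin.lastCases with
      | last =>
        cases j using Fin.lastCases with
        | last => exact absurd rfl hij
        | cast j => exact Algebra.subset_adjoin (Or.inr (Or.inr ⟨j, rfl⟩))
      | cast i =>
        cases j using Fin.lastCases with
        | last =>
          rw [← neg_sub, inv_neg]
          exact neg_mem (Algebra.subset_adjoin (Or.inr (Or.inr ⟨i, rfl⟩)))
        | cast j =>
          exact Algebra.subset_adjoin
            (Or.inl (Or.inr ⟨i, j, fun h => hij (congrArg Fin.castSucc h), rfl⟩))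
  · refine Algebra.adjoin_le ?_
    rintro _ ((⟨i, rfl⟩ | ⟨i, j, hij, rfl⟩) | rfl | ⟨i, rfl⟩)
    · exact mem_localAlgebra z i.castSucc
    · exact inv_sub_mem_localAlgebra z ((Fin.castSucc_injective n).ne hij)
    · exact mem_localAlgebra z (Fin.last n)
    · exact inv_sub_mem_localAlgebra z (Fin.castSucc_lt_last i).ne'

/-- The poles available to a factor of a basis element, paired with their orders, do not change when
a variable is added after it. -/
def castSuccPoleEquiv (j : Fin n) :
    {p : Fin n × ℕ // p.1 < j} ≃ {p : Fin (n + 1) × ℕ // p.1 < j.castSucc} where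
  toFun p := ⟨(p.1.1.castSucc, p.1.2), p.2⟩
  invFun p := ⟨(⟨p.1.1, lt_trans (Fin.lt_def.mp p.2) j.2⟩, p.1.2), p.2⟩
  left_inv _ := rfl
  right_inv _ := rfl

/-- The poles available to the last factor of a basis element, paired with their orders, are all
earlier variables. -/
def lastPoleEquiv (n : ℕ) : Fin n × ℕ ≃ {p : Fin (n + 1) × ℕ // p.1 < Fin.last n} where
  toFun p := ⟨(p.1.castSucc, p.2), Fin.castSucc_lt_last p.1⟩
  invFun p := (p.1.1.castLT p.2, p.1.2)
  left_inv _ := rfl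
  right_inv _ := rfl

/-- An index of a basis element of `L_{n+1}` is one of `L_n` together with a choice of the last
factor. -/
def BasisIdx.snocEquiv (n : ℕ) : BasisIdx n × (ℕ ⊕ Fin n × ℕ) ≃ BasisIdx (n + 1) :=
  ((Equiv.piCongrRight fun j => Equiv.sumCongr (Equiv.refl ℕ) (castSuccPoleEquiv j)).prodCongr
    (Equiv.sumCongr (Equiv.refl ℕ) (lastPoleEquiv n))).trans
    ((Equiv.prodComm _ _).trans
      (Fin.snocEquiv fun j : Fin (n + 1) => ℕ ⊕ {p : Fin (n + 1) × ℕ // p.1 < j}))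

theorem BasisIdx.snocEquiv_castSucc (p : BasisIdx n × (ℕ ⊕ Fin n × ℕ)) (j : Fin n) :
    BasisIdx.snocEquiv n p j.castSucc = Sum.map id (castSuccPoleEquiv j) (p.1 j) :=
  Fin.snoc_castSucc (α := fun j : Fin (n + 1) => ℕ ⊕ {p : Fin (n + 1) × ℕ // p.1 < j}) _ _ j

theorem BasisIdx.snocEquiv_last (p : BasisIdx n × (ℕ ⊕ Fin n × ℕ)) :
    BasisIdx.snocEquiv n p (Fin.last n) = Sum.map id (lastPoleEquiv n) p.2 :=
  Fin.snoc_last (α := fun j : Fin (n + 1) => ℕ ⊕ {p : Fin (n + 1) × ℕ // p.1 < j}) _ _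

theorem localMonomial_snocEquiv (z : Fin (n + 1) → F) (p : BasisIdx n × (ℕ ⊕ Fin n × ℕ)) :
    localMonomial z (BasisIdx.snocEquiv n p) =
      localMonomial (z ∘ Fin.castSucc) p.1 *
        partialFraction (z (Fin.last n)) (lastSubInv z) p.2 := by
  rw [localMonomial, Fin.prod_univ_castSucc, BasisIdx.snocEquiv_last]
  congr 1
  · refine Finset.prod_congr rfl fun j _ => ?_
    rw [BasisIdx.snocEquiv_castSucc]
    cases p.1 j <;> rfl
  · rcases p.2 with l | ⟨i, m⟩
    · rfl
    · change (z (Fin.last n) - z i.castSucc) ^ (-(m + 1) : ℤ) =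
        (z (Fin.last n) - z i.castSucc)⁻¹ ^ (m + 1)
      rw [zpow_neg, inv_pow]
      norm_cast

theorem localMonomial_zero (z : Fin 0 → F) (c : BasisIdx 0) : localMonomial z c = 1 :=
  Fin.prod_univ_zero _

variable (k) in
theorem span_localMonomial {z : Fin n → F} (hz : Function.Injective z) :
    Submodule.span k (Set.range (localMonomial z)) =
      Subalgebra.toSubmodule (localAlgebra k z) := by
  induction n with
  | zero =>
    have : Nonempty (BasisIdx 0) := ⟨fun j => j.elim0⟩
    rw [funext (localMonomial_zero z), Set.range_const, localAlgebra_of_isEmpty,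
      Algebra.toSubmodule_bot, Submodule.one_eq_span]
  | succ n ih =>
    let z' : Fin n → F := z ∘ Fin.castSucc
    have hz' : Function.Injective z' := hz.comp (Fin.castSucc_injective n)
    let c := partialFraction (z (Fin.last n)) (lastSubInv z)
    calc
      Submodule.span k (Set.range (localMonomial z))
      _ = Submodule.span k (Set.range fun p : BasisIdx n × (ℕ ⊕ Fin n × ℕ) =>
            localMonomial z' p.1 * c p.2) := by
        rw [← (BasisIdx.snocEquiv n).surjective.range_comp]
        exact congrArg _ (congrArg _ (funext (localMonomial_snocEquiv z)))
      _ = (Submodule.span (localAlgebra k z') (Set.range c)).restrictScalars k :=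
        span_range_mul_eq_restrictScalars_span (ih hz') c
      _ = Subalgebra.toSubmodule (localAlgebra k z) := by
        rw [localAlgebra_succ, ← adjoin_eq_span_partialFraction
          (pairwise_isUnit_sub_localAlgebra hz') (lastSubInv_mul_sub hz)]
        rfl

theorem linearIndependent_localMonomial {z : Fin n → F} (hz : AlgebraicIndependent k z) :
    LinearIndependent k (localMonomial z) := by
  have : Nontrivial k := (algebraMap k F).domain_nontrivial
  induction n with
  | zero =>
    have : Unique (BasisIdx 0) := Pi.uniqueOfIsEmpty _
    rw [funext (localMonomial_zero z), Fintype.linearIndependent_iff]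
    intro g hg c
    rw [Fintype.sum_unique, ← Algebra.algebraMap_eq_smul_one,
      map_eq_zero_iff _ hz.algebraMap_injective] at hg
    rwa [Subsingleton.elim c default]
  | succ n ih =>
    let z' : Fin n → F := z ∘ Fin.castSucc
    have hz' : AlgebraicIndependent k z' := hz.comp _ (Fin.castSucc_injective n)
    have localMonomial_mem (b : BasisIdx n) : localMonomial z' b ∈ localAlgebra k z' :=
      (span_localMonomial k hz'.injective).le (Submodule.subset_span ⟨b, rfl⟩)
    let m : BasisIdx n → localAlgebra k z' := fun b => ⟨localMonomial z' b, localMonomial_mem b⟩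
    have hm : LinearIndependent k m :=
      LinearIndependent.of_comp (localAlgebra k z').val.toLinearMap (ih hz')
    have hx : Transcendental (localAlgebra k z') (z (Fin.last n)) := by
      apply transcendental_localAlgebra
      rw [Set.range_comp]
      exact hz.transcendental_adjoin (by simp)
    have hpf := linearIndependent_partialFraction hx
      (pairwise_isUnit_sub_localAlgebra hz'.injective) (lastSubInv_mul_sub hz.injective)
    rw [← linearIndependent_equiv (BasisIdx.snocEquiv n)]
    convert linearIndependent_smul hm hpf using 2 with p
    exact localMonomial_snocEquiv z p

end LocalAlgebra

theorem algebraicIndependent_Zvar (n : ℕ) : AlgebraicIndependent ℂ (Zvar n) :=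
  (algebraicIndependent_X (Fin n) ℂ).map' (f := IsScalarTower.toAlgHom ℂ _ (RatField n))
    (IsFractionRing.injective _ _)

/-- for every `n ≥ 0`, the family `basisElem n` is a ℂ-vector-space basis
of `L_n`: it is linearly independent and spans exactly `L_n`. -/
theorem localFn_basis (n : ℕ) :
    LinearIndependent ℂ (basisElem n) ∧
      Submodule.span ℂ (Set.range (basisElem n)) = Subalgebra.toSubmodule (LocalFn n) := by
  have hz := algebraicIndependent_Zvar n
  exact ⟨linearIndependent_localMonomial hz, span_localMonomial ℂ hz.injective⟩
end

section
/- For every n ≥ 0, every f ∈ L_{n+1} can be written in exactly one way as a finite sum f = Σ_{ℓ ≥ 0} g_ℓ · z_{n+1}^ℓ + Σ_{i=1}^{n} Σ_{k < 0} g_{i,k} · (z_{n+1} − z_i)^k, where the coefficients g_ℓ and g_{i,k} lie in L_n (they are local functions in z_1,…,z_n only) and all but finitely many of them are zero. -/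
open MvPolynomial

/-- `L_n` viewed inside `ℂ(z_1,…,z_{n+1})`: the ℂ-subalgebra generated by the first `n`
variables `z_1,…,z_n` and the inverses of their differences; its elements are the local
functions in `z_1,…,z_n` only. -/
noncomputable def LocalFnLower (n : ℕ) : Subalgebra ℂ (RatField (n + 1)) :=
  Algebra.adjoin ℂ
    ((Set.range fun i : Fin n => Zvar (n + 1) i.castSucc) ∪
      {x | ∃ i j : Fin n, i ≠ j ∧
        x = (Zvar (n + 1) i.castSucc - Zvar (n + 1) j.castSucc)⁻¹})

/-! The map sending coefficients `(g, h)` over `A` to `∑ g_ℓ t ^ ℓ + ∑ h_{i,m} (t - a_i)^{-(m+1)}`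
has the `A`-algebra `A[t, (t - a_i)⁻¹]` as its image as soon as the differences `a_i - a_j` are
units of `A`: the image contains `1`, and it is stable under multiplication by `t` and by
`(t - a_i)⁻¹` because `(t - a)⁻¹ (t - b)⁻¹ = (a - b)⁻¹ ((t - a)⁻¹ - (t - b)⁻¹)`. It is injective
when `t` is transcendental over `A`, by uniqueness of partial fractions over `A[X]`. Local functions
fit this pattern: adjoining the variable `t = z_{n+1}` to `A = L_n` only requires `t` and the
inverses `(t - z_i)⁻¹`, and `t` stays transcendental over `L_n`, which is algebraic over
`ℂ[z_1, …, z_n]`. -/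

section PartialFractions

open scoped Polynomial

variable {A K ι : Type*} [CommRing A] [Field K] [Algebra A K]

/-- The functions `(t - a i)^{-(m+1)}`, indexed by a pole `a i` and by `m : ℕ`: the principal parts
of partial fraction expansions in `t` with poles at the `a i`. -/
def polarFamily (t : K) (a : ι → A) (p : ι × ℕ) : K :=
  (t - algebraMap A K (a p.1))⁻¹ ^ (p.2 + 1)

/-- Evaluation of a partial fraction expansion: the coefficients `(g, h)` are sent to
`∑ g ℓ * t ^ ℓ + ∑ h (i, m) * (t - a i)^{-(m+1)}`. -/
noncomputable def partialFractionSum (t : K) (a : ι → A) :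
    (ℕ →₀ A) × (ι × ℕ →₀ A) →ₗ[A] K :=
  (Finsupp.linearCombination A (t ^ ·)).coprod (Finsupp.linearCombination A (polarFamily t a))

theorem range_partialFractionSum_eq_span (t : K) (a : ι → A) :
    LinearMap.range (partialFractionSum t a) =
      Submodule.span A (Set.range (t ^ · : ℕ → K) ∪ Set.range (polarFamily t a)) := by
  rw [partialFractionSum, LinearMap.range_coprod, Finsupp.range_linearCombination,
    Finsupp.range_linearCombination, Submodule.span_union]

theorem adjoin_toSubmodule_le_span {R B : Type*} [CommSemiring R] [Semiring B] [Algebra R B]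
    {S G : Set B} (one_mem : 1 ∈ Submodule.span R G)
    (mul_mem : ∀ x ∈ S, ∀ y ∈ G, x * y ∈ Submodule.span R G) :
    Subalgebra.toSubmodule (Algebra.adjoin R S) ≤ Submodule.span R G := by
  have mul_mem_span : ∀ x ∈ S, ∀ y ∈ Submodule.span R G, x * y ∈ Submodule.span R G :=
    fun x hx => (Submodule.span_le (p := (Submodule.span R G).comap (LinearMap.mulLeft R x))).2
      (mul_mem x hx)
  rw [Algebra.adjoin_toSubmodule_le]
  intro x hx
  induction hx using Submonoid.closure_induction_left with
  | one => exact one_mem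
  | mul_left x hx y _ hy => exact mul_mem_span x hx y hy

theorem pow_mem_range_partialFractionSum (t : K) (a : ι → A) (l : ℕ) :
    t ^ l ∈ LinearMap.range (partialFractionSum t a) := by
  rw [range_partialFractionSum_eq_span]
  exact Submodule.subset_span (Or.inl ⟨l, rfl⟩)

theorem inv_pow_mem_range_partialFractionSum (t : K) (a : ι → A) (i : ι) (m : ℕ) :
    (t - algebraMap A K (a i))⁻¹ ^ m ∈ LinearMap.range (partialFractionSum t a) := by
  cases m with
  | zero => simpa only [pow_zero] using pow_mem_range_partialFractionSum t a 0
  | succ m =>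
    rw [range_partialFractionSum_eq_span]
    exact Submodule.subset_span (Or.inr ⟨(i, m), rfl⟩)

section Span

variable {t : K} {a : ι → A}

theorem mul_polarFamily_mem_range_partialFractionSum {i : ι} (hi : t - algebraMap A K (a i) ≠ 0)
    (m : ℕ) : t * polarFamily t a (i, m) ∈ LinearMap.range (partialFractionSum t a) := by
  have expand : t * polarFamily t a (i, m) =
      (t - algebraMap A K (a i))⁻¹ ^ m + a i • (t - algebraMap A K (a i))⁻¹ ^ (m + 1) := by
    rw [polarFamily, Algebra.smul_def, pow_succ]
    field_simp
    ring
  rw [expand]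
  exact add_mem (inv_pow_mem_range_partialFractionSum t a i m)
    (Submodule.smul_mem _ _ (inv_pow_mem_range_partialFractionSum t a i (m + 1)))

theorem inv_mul_pow_mem_range_partialFractionSum {i : ι} (hi : t - algebraMap A K (a i) ≠ 0)
    (l : ℕ) :
    (t - algebraMap A K (a i))⁻¹ * t ^ l ∈ LinearMap.range (partialFractionSum t a) := by
  induction l with
  | zero => simpa using inv_pow_mem_range_partialFractionSum t a i 1
  | succ l ih =>
    have expand : (t - algebraMap A K (a i))⁻¹ * t ^ (l + 1) =
        t ^ l + a i • ((t - algebraMap A K (a i))⁻¹ * t ^ l) := by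
      rw [Algebra.smul_def]
      field_simp
      ring
    rw [expand]
    exact add_mem (pow_mem_range_partialFractionSum t a l) (Submodule.smul_mem _ _ ih)

theorem inv_mul_inv_eq_smul_inv_sub_inv {b c d : A} (hd : d * (b - c) = 1)
    (hb : t - algebraMap A K b ≠ 0) (hc : t - algebraMap A K c ≠ 0) :
    (t - algebraMap A K b)⁻¹ * (t - algebraMap A K c)⁻¹ =
      d • ((t - algebraMap A K b)⁻¹ - (t - algebraMap A K c)⁻¹) := by
  have hd' : algebraMap A K d * (algebraMap A K b - algebraMap A K c) = 1 := by
    rw [← map_sub, ← map_mul, hd, map_one]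
  rw [inv_sub_inv hb hc, Algebra.smul_def, ← mul_div_assoc, sub_sub_sub_cancel_left, hd',
    one_div, mul_inv]

theorem inv_mul_inv_pow_mem_range_partialFractionSum (ha : Pairwise fun i j => IsUnit (a i - a j))
    (hta : ∀ i, t - algebraMap A K (a i) ≠ 0) (i j : ι) (m : ℕ) :
    (t - algebraMap A K (a i))⁻¹ * (t - algebraMap A K (a j))⁻¹ ^ m ∈
      LinearMap.range (partialFractionSum t a) := by
  obtain rfl | hij := eq_or_ne i j
  · rw [← pow_succ']
    exact inv_pow_mem_range_partialFractionSum t a i (m + 1)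
  obtain ⟨d, hd⟩ := (ha hij).exists_left_inv
  induction m with
  | zero => simpa using inv_pow_mem_range_partialFractionSum t a i 1
  | succ m ih =>
    rw [pow_succ', ← mul_assoc, inv_mul_inv_eq_smul_inv_sub_inv hd (hta i) (hta j),
      smul_mul_assoc, sub_mul, ← pow_succ']
    exact Submodule.smul_mem _ _
      (sub_mem ih (inv_pow_mem_range_partialFractionSum t a j (m + 1)))

theorem range_partialFractionSum (ha : Pairwise fun i j => IsUnit (a i - a j))
    (hta : ∀ i, t - algebraMap A K (a i) ≠ 0) :
    LinearMap.range (partialFractionSum t a) = Subalgebra.toSubmodule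
      (Algebra.adjoin A (insert t (Set.range fun i => (t - algebraMap A K (a i))⁻¹))) := by
  apply le_antisymm
  · rw [range_partialFractionSum_eq_span, Submodule.span_le]
    rintro _ (⟨l, rfl⟩ | ⟨⟨i, m⟩, rfl⟩)
    · exact pow_mem (Algebra.subset_adjoin (Set.mem_insert _ _)) l
    · exact pow_mem (Algebra.subset_adjoin (Set.mem_insert_of_mem _ (Set.mem_range_self i))) (m + 1)
  · rw [range_partialFractionSum_eq_span]
    apply adjoin_toSubmodule_le_span <;> rw [← range_partialFractionSum_eq_span]
    · simpa only [pow_zero] using pow_mem_range_partialFractionSum t a 0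
    · rintro _ (rfl | ⟨i, rfl⟩) _ (⟨l, rfl⟩ | ⟨⟨j, m⟩, rfl⟩)
      · simpa only [pow_succ'] using pow_mem_range_partialFractionSum _ a (l + 1)
      · exact mul_polarFamily_mem_range_partialFractionSum (hta j) m
      · exact inv_mul_pow_mem_range_partialFractionSum (hta i) l
      · exact inv_mul_inv_pow_mem_range_partialFractionSum ha hta i j (m + 1)

end Span

theorem linearCombination_pow_eq_aeval (t : K) (g : ℕ →₀ A) :
    Finsupp.linearCombination A (t ^ ·) g =
      Polynomial.aeval t ((Polynomial.basisMonomials A).repr.symm g) := by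
  simp only [Module.Basis.repr_symm_apply, Polynomial.coe_basisMonomials,
    Finsupp.linearCombination_apply, Finsupp.sum, map_sum, map_smul, Polynomial.aeval_monomial,
    map_one, one_mul]

theorem exists_support_subset_product_range {M : Type*} [Zero M] (c : ι × ℕ →₀ M) :
    ∃ (s : Finset ι) (N : ℕ), c.support ⊆ s ×ˢ Finset.range N := by
  classical
  obtain ⟨N, hN⟩ := (c.support.image Prod.snd).exists_nat_subset_range
  exact ⟨c.support.image Prod.fst, N,
    Finset.subset_product.trans (Finset.product_subset_product_right hN)⟩

theorem linearCombination_polarFamily_eq_sum (t : K) (a : ι → A) {h : ι × ℕ →₀ A} {s : Finset ι}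
    {N : ℕ} (hs : h.support ⊆ s ×ˢ Finset.range N) :
    Finsupp.linearCombination A (polarFamily t a) h =
      ∑ i ∈ s, ∑ m : Fin N,
        algebraMap A K (h (i, m)) * (t - algebraMap A K (a i))⁻¹ ^ (m.1 + 1) := by
  rw [Finsupp.linearCombination_apply, Finsupp.sum_of_support_subset _ hs _ (by simp),
    Finset.sum_product]
  refine Finset.sum_congr rfl fun i _ => ?_
  rw [Finset.sum_range]
  simp only [polarFamily, Algebra.smul_def]

theorem sub_algebraMap_ne_zero_of_transcendental {t : K} (ht : Transcendental A t) (b : A) :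
    t - algebraMap A K b ≠ 0 := by
  have : Nontrivial A := (algebraMap A K).domain_nontrivial
  intro h
  exact ht (sub_eq_zero.1 h ▸ isAlgebraic_algebraMap b)

theorem eq_zero_of_aeval_add_sum_inv_pow_eq_zero {t : K} {a : ι → A}
    (ha : Pairwise fun i j => IsUnit (a i - a j)) (ht : Transcendental A t) {q : A[X]}
    {s : Finset ι} {N : ℕ} {c : ι → Fin N → A}
    (h : Polynomial.aeval t q + ∑ i ∈ s, ∑ m : Fin N,
      algebraMap A K (c i m) * (t - algebraMap A K (a i))⁻¹ ^ (m.1 + 1) = 0) :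
    q = 0 ∧ ∀ i ∈ s, ∀ m, c i m = 0 := by
  have : Nontrivial A := (algebraMap A K).domain_nontrivial
  let : Algebra A[X] K := (Polynomial.aeval (R := A) t).toRingHom.toAlgebra
  have algebraMap_eq (p : A[X]) : algebraMap A[X] K p = Polynomial.aeval t p := rfl
  have : FaithfulSMul A[X] K :=
    (faithfulSMul_iff_algebraMap_injective _ _).2 (transcendental_iff_injective.1 ht)
  have inv_mul (i : ι) : (t - algebraMap A K (a i))⁻¹ *
      algebraMap A[X] K (Polynomial.X - Polynomial.C (a i)) = 1 := by
    simpa [algebraMap_eq] using inv_mul_cancel₀ (sub_algebraMap_ne_zero_of_transcendental ht (a i))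
  obtain ⟨hq, hc⟩ := Polynomial.quo_add_sum_rem_mul_pow_inverse_unique (K := K) (s := s)
    (g := fun i => Polynomial.X - Polynomial.C (a i)) (n := fun _ => N)
    (gi := fun i => (t - algebraMap A K (a i))⁻¹) (q₁ := q) (q₂ := 0)
    (r₁ := fun i m => Polynomial.C (c i m)) (r₂ := fun _ _ => 0)
    (fun i _ => Polynomial.monic_X_sub_C (a i))
    (fun i _ j _ hij => Polynomial.isCoprime_X_sub_C_of_isUnit_sub (ha hij))
    (fun i _ => inv_mul i)
    (fun i _ _ => Polynomial.degree_C_le.trans_lt (by simp [Polynomial.degree_X_sub_C]))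
    (fun i _ _ => by simp [Polynomial.degree_X_sub_C])
    (by simpa [algebraMap_eq] using h)
  exact ⟨hq, fun i hi m => Polynomial.C_eq_zero.1 (congrFun (hc i hi) m)⟩

theorem partialFractionSum_injective {t : K} {a : ι → A}
    (ha : Pairwise fun i j => IsUnit (a i - a j)) (ht : Transcendental A t) :
    Function.Injective (partialFractionSum t a) := by
  rw [injective_iff_map_eq_zero]
  rintro ⟨g, h⟩ hgh
  obtain ⟨s, N, hs⟩ := exists_support_subset_product_range h
  rw [partialFractionSum, LinearMap.coprod_apply, linearCombination_pow_eq_aeval,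
    linearCombination_polarFamily_eq_sum t a hs] at hgh
  obtain ⟨hg, hh⟩ := eq_zero_of_aeval_add_sum_inv_pow_eq_zero ha ht hgh
  have h_eq_zero (p : ι × ℕ) : h p = 0 := by
    by_contra hp
    obtain ⟨hi, hm⟩ := Finset.mem_product.1 (hs (Finsupp.mem_support_iff.2 hp))
    exact hp (hh p.1 hi ⟨p.2, Finset.mem_range.1 hm⟩)
  exact Prod.ext ((LinearEquiv.map_eq_zero_iff _).1 hg) (Finsupp.ext h_eq_zero)

end PartialFractions

section Coefficients

variable {k K ι : Type*} [CommRing k] [Field K] [Algebra k K] {A : Subalgebra k K}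

theorem exists_mapRange_val_eq {α : Type*} {g : α →₀ K} (hg : ∀ x, g x ∈ A) :
    ∃ c : α →₀ A, c.mapRange Subtype.val rfl = g := by
  rw [← Set.mem_range, Finsupp.range_mapRange]
  simpa [Subtype.range_val] using hg

theorem partialFractionSum_eq_mapRange_sum (t : K) (a : ι → A) (c : (ℕ →₀ A) × (ι × ℕ →₀ A)) :
    partialFractionSum t a c =
      ((c.1.mapRange Subtype.val rfl).sum fun ℓ g => g * t ^ ℓ) +
        (c.2.mapRange Subtype.val rfl).sum fun p g => g * (t - a p.1) ^ (-(p.2 + 1) : ℤ) := by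
  rw [Finsupp.sum_mapRange_index fun _ => zero_mul _,
    Finsupp.sum_mapRange_index fun _ => zero_mul _]
  have polar (p : ι × ℕ) : polarFamily t a p = (t - a p.1) ^ (-(p.2 + 1) : ℤ) := by
    rw [polarFamily, inv_pow, zpow_neg, ← Nat.cast_succ, zpow_natCast]
    rfl
  simp only [← polar]
  rfl

theorem existsUnique_partialFraction {t : K} {a : ι → A}
    (ha : Pairwise fun i j => IsUnit (a i - a j)) (ht : Transcendental A t) {f : K}
    (hf : f ∈ Algebra.adjoin A (insert t (Set.range fun i => (t - a i : K)⁻¹))) :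
    ∃! gh : (ℕ →₀ K) × (ι × ℕ →₀ K),
      (∀ ℓ, gh.1 ℓ ∈ A) ∧ (∀ p, gh.2 p ∈ A) ∧
      f = (gh.1.sum fun ℓ g => g * t ^ ℓ) +
          gh.2.sum fun p g => g * (t - a p.1) ^ (-(p.2 + 1) : ℤ) := by
  obtain ⟨c, rfl⟩ : f ∈ LinearMap.range (partialFractionSum t a) := by
    rw [range_partialFractionSum ha fun i => sub_algebraMap_ne_zero_of_transcendental ht (a i)]
    exact hf
  refine ⟨(c.1.mapRange Subtype.val rfl, c.2.mapRange Subtype.val rfl),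
    ⟨fun ℓ => (c.1 ℓ).2, fun p => (c.2 p).2, partialFractionSum_eq_mapRange_sum t a c⟩, ?_⟩
  rintro ⟨g, h⟩ ⟨hg, hh, hgh⟩
  obtain ⟨g, rfl⟩ := exists_mapRange_val_eq hg
  obtain ⟨h, rfl⟩ := exists_mapRange_val_eq hh
  obtain rfl : c = (g, h) := partialFractionSum_injective ha ht <|
    hgh.trans (partialFractionSum_eq_mapRange_sum t a (g, h)).symm
  rfl

end Coefficients

section LocalSubalgebra

open scoped Pointwise

variable {K : Type*} [Field K]

/-- The local functions in a set `S` of elements of a field: the `k`-subalgebra generated by `S`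
and the inverses of all differences of elements of `S`. The difference `x - x` contributes only the
junk value `0⁻¹ = 0`. -/
def localSubalgebra (k : Type*) [CommRing k] [Algebra k K] (S : Set K) : Subalgebra k K :=
  Algebra.adjoin k (S ∪ (S - S)⁻¹)

variable {k : Type*} [CommRing k] [Algebra k K] {S : Set K} {t : K}

theorem subset_localSubalgebra : S ⊆ localSubalgebra k S :=
  Set.subset_union_left.trans Algebra.subset_adjoin

theorem inv_sub_mem_localSubalgebra {x y : K} (hx : x ∈ S) (hy : y ∈ S) :
    (x - y)⁻¹ ∈ localSubalgebra k S :=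
  Algebra.subset_adjoin (Or.inr (Set.inv_mem_inv.2 (Set.sub_mem_sub hx hy)))

theorem localSubalgebra_le_iff {B : Subalgebra k K} :
    localSubalgebra k S ≤ B ↔ S ⊆ B ∧ ∀ x ∈ S, ∀ y ∈ S, (x - y)⁻¹ ∈ B := by
  rw [localSubalgebra, Algebra.adjoin_le_iff, Set.union_subset_iff]
  refine and_congr_right fun _ => ⟨fun h x hx y hy => h ?_, ?_⟩
  · exact Set.inv_mem_inv.2 (Set.sub_mem_sub hx hy)
  · rintro h z ⟨x, hx, y, hy, hz⟩
    rw [← inv_inv z, ← hz]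
    exact h x hx y hy

theorem localSubalgebra_insert_le :
    localSubalgebra k (insert t S) ≤ (Algebra.adjoin (localSubalgebra k S)
      (insert t ((fun x => (t - x)⁻¹) '' S))).restrictScalars k := by
  set L := localSubalgebra k S
  set B := Algebra.adjoin L (insert t ((fun x => (t - x)⁻¹) '' S))
  have mem_of_mem_L {x : K} (hx : x ∈ L) : x ∈ B := B.algebraMap_mem ⟨x, hx⟩
  have t_mem : t ∈ B := Algebra.subset_adjoin (Set.mem_insert _ _)
  have inv_mem {x : K} (hx : x ∈ S) : (t - x)⁻¹ ∈ B :=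
    Algebra.subset_adjoin (Set.mem_insert_of_mem _ (Set.mem_image_of_mem _ hx))
  refine localSubalgebra_le_iff.2 ⟨?_, ?_⟩
  · rintro x (rfl | hx)
    · exact t_mem
    · exact mem_of_mem_L (subset_localSubalgebra hx)
  · rintro x (rfl | hx) y (rfl | hy)
    · simp
    · exact inv_mem hy
    · rw [← neg_sub, inv_neg]
      exact neg_mem (inv_mem hx)
    · exact mem_of_mem_L (inv_sub_mem_localSubalgebra hx hy)

theorem transcendental_localSubalgebra (ht : Transcendental (Algebra.adjoin k S) t) :
    Transcendental (localSubalgebra k S) t := by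
  refine fun h => ht (h.adjoin_of_forall_isAlgebraic ?_)
  rintro x ⟨hxS | ⟨y, hy, z, hz, hxyz⟩, hx⟩
  · exact absurd hxS hx
  · rw [← IsAlgebraic.inv_iff, ← hxyz]
    exact isAlgebraic_algebraMap
      (⟨y - z, sub_mem (Algebra.subset_adjoin hy) (Algebra.subset_adjoin hz)⟩ : Algebra.adjoin k S)

theorem isUnit_localSubalgebra_sub {x y : localSubalgebra k S} (hx : (x : K) ∈ S) (hy : (y : K) ∈ S)
    (hxy : x ≠ y) : IsUnit (x - y) :=
  IsUnit.of_mul_eq_one ⟨(x - y : K)⁻¹, inv_sub_mem_localSubalgebra hx hy⟩ <|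
    Subtype.ext <| mul_inv_cancel₀ <| sub_ne_zero.2 <| Subtype.coe_ne_coe.2 hxy

theorem localFn_decomposition_general {ι : Type*} {x : ι → K} (hx : Function.Injective x)
    (ht : Transcendental (Algebra.adjoin k (Set.range x)) t) {f : K}
    (hf : f ∈ localSubalgebra k (insert t (Set.range x))) :
    ∃! gh : (ℕ →₀ K) × (ι × ℕ →₀ K),
      (∀ ℓ, gh.1 ℓ ∈ localSubalgebra k (Set.range x)) ∧
      (∀ p, gh.2 p ∈ localSubalgebra k (Set.range x)) ∧
      f = (gh.1.sum fun ℓ g => g * t ^ ℓ) +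
          gh.2.sum fun p g => g * (t - x p.1) ^ (-(p.2 + 1) : ℤ) := by
  let a (i : ι) : localSubalgebra k (Set.range x) :=
    ⟨x i, subset_localSubalgebra (Set.mem_range_self i)⟩
  refine existsUnique_partialFraction (a := a) (fun i j hij => ?_)
    (transcendental_localSubalgebra ht) ?_
  · exact isUnit_localSubalgebra_sub (Set.mem_range_self i) (Set.mem_range_self j) fun h =>
      hij (hx (congrArg Subtype.val h))
  · have hf' := localSubalgebra_insert_le hf
    rwa [Subalgebra.mem_restrictScalars, ← Set.range_comp] at hf'

theorem adjoin_range_union_inv_sub_eq_localSubalgebra {ι : Type*} (x : ι → K) :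
    Algebra.adjoin k (Set.range x ∪ {z | ∃ i j, i ≠ j ∧ z = (x i - x j)⁻¹}) =
      localSubalgebra k (Set.range x) := by
  apply le_antisymm
  · refine Algebra.adjoin_le (Set.union_subset subset_localSubalgebra ?_)
    rintro _ ⟨i, j, -, rfl⟩
    exact inv_sub_mem_localSubalgebra (Set.mem_range_self i) (Set.mem_range_self j)
  · refine localSubalgebra_le_iff.2 ⟨Set.subset_union_left.trans Algebra.subset_adjoin, ?_⟩
    rintro _ ⟨i, rfl⟩ _ ⟨j, rfl⟩
    obtain rfl | hij := eq_or_ne i j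
    · simp
    · exact Algebra.subset_adjoin (Or.inr ⟨i, j, hij, rfl⟩)

end LocalSubalgebra

theorem Zvar_castSucc_injective (n : ℕ) :
    Function.Injective fun i : Fin n => Zvar (n + 1) i.castSucc :=
  (algebraicIndependent_Zvar (n + 1)).injective.comp (Fin.castSucc_injective n)

theorem transcendental_Zvar_last (n : ℕ) :
    Transcendental (Algebra.adjoin ℂ (Set.range fun i : Fin n => Zvar (n + 1) i.castSucc))
      (Zvar (n + 1) (Fin.last n)) := by
  rw [Set.range_comp' (Zvar (n + 1)) Fin.castSucc]
  refine (algebraicIndependent_Zvar (n + 1)).transcendental_adjoin ?_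
  rintro ⟨i, hi⟩
  exact (Fin.castSucc_lt_last i).ne hi

theorem LocalFnLower_eq_localSubalgebra (n : ℕ) :
    LocalFnLower n =
      localSubalgebra ℂ (Set.range fun i : Fin n => Zvar (n + 1) i.castSucc) :=
  adjoin_range_union_inv_sub_eq_localSubalgebra _

theorem LocalFn_succ_eq_localSubalgebra (n : ℕ) :
    LocalFn (n + 1) = localSubalgebra ℂ (insert (Zvar (n + 1) (Fin.last n))
      (Set.range fun i : Fin n => Zvar (n + 1) i.castSucc)) := by
  have range_Zvar : Set.range (Zvar (n + 1)) = insert (Zvar (n + 1) (Fin.last n))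
      (Set.range fun i : Fin n => Zvar (n + 1) i.castSucc) := by
    rw [← Fin.range_snoc]
    exact congrArg Set.range (Fin.snoc_init_self (Zvar (n + 1))).symm
  rw [← range_Zvar]
  exact adjoin_range_union_inv_sub_eq_localSubalgebra _

/-- every `f ∈ L_{n+1}` can be written in exactly one way as a finite sum
`f = Σ_{ℓ ≥ 0} g_ℓ · z_{n+1}^ℓ + Σ_{i=1}^{n} Σ_{k<0} g_{i,k} · (z_{n+1} - z_i)^k`
with all coefficients `g_ℓ`, `g_{i,k}` local functions in `z_1,…,z_n` only, and all but
finitely many of them zero.  A negative exponent `k < 0` is recorded as `k = -(m+1)`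
for `m : ℕ`, so the second family of coefficients is indexed by `Fin n × ℕ`. -/
theorem localFn_decomposition (n : ℕ) (f : RatField (n + 1)) (hf : f ∈ LocalFn (n + 1)) :
    ∃! gh : (ℕ →₀ RatField (n + 1)) × (Fin n × ℕ →₀ RatField (n + 1)),
      (∀ ℓ : ℕ, gh.1 ℓ ∈ LocalFnLower n) ∧
      (∀ p : Fin n × ℕ, gh.2 p ∈ LocalFnLower n) ∧
      f = (gh.1.sum fun ℓ g => g * Zvar (n + 1) (Fin.last n) ^ ℓ) +
          gh.2.sum fun p g =>
            g * (Zvar (n + 1) (Fin.last n) - Zvar (n + 1) p.1.castSucc) ^ (-(p.2 + 1) : ℤ) := by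
  rw [LocalFn_succ_eq_localSubalgebra] at hf
  simpa only [LocalFnLower_eq_localSubalgebra] using
    localFn_decomposition_general (Zvar_castSucc_injective n) (transcendental_Zvar_last n) hf
end

section
/- In a uniform ℤ-graded vertex algebra V, for all a, b ∈ V and all n ∈ ℤ one has (L_{−1}a)(n)b = −n · a(n−1)b; equivalently, the field of L_{−1}a is the formal z-derivative of the field of a. -/
/-- A uniform ℤ-graded vertex algebra: a ℤ-graded complex vector space with bilinear
products `a(n)b`, a translation operator `L₋₁`, and a vacuum `1`, satisfying uniform
locality, translation covariance, the vacuum-field axiom and the creation axiom. -/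
structure UniformVertexAlgebra (V : Type*) [AddCommGroup V] [Module ℂ V] where
  /-- The grading `V = ⊕_{n ∈ ℤ} V_n`. -/
  grading : ℤ → Submodule ℂ V
  /-- The grading is an (internal) direct sum decomposition of `V`. -/
  decomposition : DirectSum.Decomposition grading
  /-- The bilinear products: `mul n a b` is `a(n)b`. -/
  mul : ℤ → V →ₗ[ℂ] V →ₗ[ℂ] V
  /-- The translation operator `L₋₁`. -/
  T : V →ₗ[ℂ] V
  /-- The vacuum vector `1`. -/
  vac : V
  vac_mem : vac ∈ grading 0
  /-- `a(n)` maps `V_m` into `V_{m−n+k−1}` whenever `a ∈ V_k`. -/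
  mul_mem : ∀ (n k m : ℤ) (a c : V), a ∈ grading k → c ∈ grading m →
    mul n a c ∈ grading (m - n + k - 1)
  /-- `L₋₁` has degree one. -/
  T_mem : ∀ (n : ℤ) (a : V), a ∈ grading n → T a ∈ grading (n + 1)
  /-- Uniform locality, in coefficient form: `(z−t)^N [a(z), b(t)] = 0`. -/
  locality : ∀ a b : V, ∃ N : ℕ, ∀ (p q : ℤ) (c : V),
    ∑ r ∈ Finset.range (N + 1),
      ((-1 : ℂ) ^ r * (N.choose r : ℂ)) •
        (mul (p + N - r) a (mul (q + r) b c) - mul (q + r) b (mul (p + N - r) a c)) = 0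
  /-- Translation covariance: `[L₋₁, a(n)] = −n·a(n−1)`. -/
  translation : ∀ (n : ℤ) (a c : V),
    T (mul n a c) - mul n a (T c) = -(n • mul (n - 1) a c)
  T_vac : T vac = 0
  /-- Vacuum field: `1(n)c = c` if `n = −1` and `0` otherwise. -/
  vac_field : ∀ (n : ℤ) (c : V), mul n vac c = if n = -1 then c else 0
  /-- Creation: `a(n)1 = 0` for `n ≥ 0`. -/
  creation : ∀ (n : ℤ) (a : V), 0 ≤ n → mul n a vac = 0
  /-- Creation: `a(−1)1 = a`. -/
  create_self : ∀ a : V, mul (-1) a vac = a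

/-- The locality statement for a pair `(a,b)` with a specific witness `N`. -/
def UniformVertexAlgebra.LocalityAt {V : Type*} [AddCommGroup V] [Module ℂ V]
    (A : UniformVertexAlgebra V) (a b : V) (N : ℕ) : Prop :=
  ∀ (p q : ℤ) (c : V),
    ∑ r ∈ Finset.range (N + 1),
      ((-1 : ℂ) ^ r * (N.choose r : ℂ)) •
        (A.mul (p + N - r) a (A.mul (q + r) b c) -
          A.mul (q + r) b (A.mul (p + N - r) a c)) = 0

/-!
If the field of `c` kills the vacuum, locality with `b(t)` gives `(z - t) ^ N c(z) b(t) 1 = 0`, and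
by creation `t = 0` may be substituted: `z ^ N c(z) b = 0`, so `c(z) = 0`. Hence a field which is
local with all others is determined by its action on the vacuum (Goddard's uniqueness theorem), and
for translation-covariant fields this reduces to the single mode `-1`. Both the field of `L₋₁ a` and
the derivative of the field of `a` are such fields, with common value `L₋₁ a`.
-/

/-- The formal derivative of `φ(z) = ∑ φ(n) z ^ (-n - 1)`, in terms of the modes `φ n = φ(n)`.
Applied to the modes of a series in `z` and `t`, it is the partial derivative in `z`. -/
def formalDeriv {M : Type*} [AddCommGroup M] : AddMonoid.End (ℤ → M) where
  toFun φ n := -(n • φ (n - 1))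
  map_zero' := by ext; simp
  map_add' φ ψ := by ext; simp [add_comm]

/-- Multiplication by `z - t` on formal series `∑ F(p, q) z ^ (-p - 1) t ^ (-q - 1)`, in terms of
the modes `F p q = F(p, q)`. It serves to express locality. -/
def mulZSubT {M : Type*} [AddCommGroup M] : AddMonoid.End (ℤ → ℤ → M) where
  toFun F p q := F (p + 1) q - F p (q + 1)
  map_zero' := by ext; simp
  map_add' F G := by ext; simp [add_sub_add_comm]

section FormalSeries

variable {M : Type*} [AddCommGroup M]

theorem formalDeriv_apply (φ : ℤ → M) (n : ℤ) : formalDeriv φ n = -(n • φ (n - 1)) := rfl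

theorem mulZSubT_apply (F : ℤ → ℤ → M) (p q : ℤ) :
    mulZSubT F p q = F (p + 1) q - F p (q + 1) := rfl

-- Up to sign, multiplication by `z - t` is the forward difference along the lines `p + q = const`.
theorem mulZSubT_pow_apply_eq_fwdDiff_iter (F : ℤ → ℤ → M) (N : ℕ) (p q : ℤ) :
    (mulZSubT ^ N) F p q = (-1 : ℤ) ^ N • (fwdDiff 1)^[N] (fun k => F (p + q + N - k) k) q := by
  induction N generalizing p q with
  | zero => simp
  | succ N ih =>
    have left : p + 1 + q + N = p + q + (N + 1 : ℕ) := by push_cast; ring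
    have right : p + (q + 1) + N = p + q + (N + 1 : ℕ) := by push_cast; ring
    rw [pow_succ', AddMonoid.End.coe_mul, Function.comp_apply, mulZSubT_apply, ih, ih, left, right,
      ← smul_sub, Function.iterate_succ_apply', fwdDiff, pow_succ, mul_neg_one, neg_smul,
      ← smul_neg, neg_sub]

theorem mulZSubT_pow_apply (F : ℤ → ℤ → M) (N : ℕ) (p q : ℤ) :
    (mulZSubT ^ N) F p q =
      ∑ r ∈ Finset.range (N + 1), ((-1 : ℤ) ^ r * N.choose r) • F (p + N - r) (q + r) := by
  rw [mulZSubT_pow_apply_eq_fwdDiff_iter, fwdDiff_iter_eq_sum_shift, Finset.smul_sum]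
  refine Finset.sum_congr rfl fun r hr => ?_
  obtain ⟨k, rfl⟩ := Nat.exists_eq_add_of_le (Finset.mem_range_succ_iff.mp hr)
  have sign : (-1 : ℤ) ^ (r + k) * (-1) ^ k = (-1) ^ r := by
    rw [pow_add, mul_assoc, ← mul_pow, neg_one_mul, neg_neg, one_pow, mul_one]
  rw [Nat.add_sub_cancel_left, smul_smul, ← mul_assoc, sign, nsmul_one]
  congr 2
  ring

theorem mulZSubT_formalDeriv (F : ℤ → ℤ → M) :
    mulZSubT (formalDeriv F) = formalDeriv (mulZSubT F) - F := by
  ext p q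
  simp only [mulZSubT_apply, formalDeriv_apply, Pi.sub_apply, Pi.neg_apply, Pi.smul_apply,
    add_sub_cancel_right, sub_add_cancel]
  module

theorem mulZSubT_pow_eq_zero_of_le {F : ℤ → ℤ → M} {m n : ℕ} (hmn : m ≤ n)
    (hF : (mulZSubT ^ m) F = 0) : (mulZSubT ^ n) F = 0 := by
  rw [← Nat.sub_add_cancel hmn, pow_add, AddMonoid.End.coe_mul, Function.comp_apply, hF, map_zero]

theorem mulZSubT_pow_succ_formalDeriv_eq_zero {F : ℤ → ℤ → M} {N : ℕ}
    (hF : (mulZSubT ^ N) F = 0) : (mulZSubT ^ (N + 1)) (formalDeriv F) = 0 := by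
  induction N generalizing F with
  | zero =>
    obtain rfl : F = 0 := hF
    simp only [map_zero]
  | succ N ih =>
    rw [pow_succ, AddMonoid.End.coe_mul, Function.comp_apply, mulZSubT_formalDeriv, map_sub, hF,
      sub_zero]
    exact ih (by rwa [pow_succ, AddMonoid.End.coe_mul] at hF)

end FormalSeries

section Locality

variable {L : Type*} [LieRing L]

/-- The modes of the commutator `[φ(z), ψ(t)]`, a series in both variables. -/
def commutatorSeries (φ ψ : ℤ → L) : ℤ → ℤ → L := fun p q => ⁅φ p, ψ q⁆

/-- Mutual locality of `φ(z)` and `ψ(t)`: `(z - t) ^ N [φ(z), ψ(t)] = 0` for some `N`. For fields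
of endomorphisms, `N` is uniform in the vector acted upon. -/
def MutuallyLocal (φ ψ : ℤ → L) : Prop :=
  ∃ N : ℕ, (mulZSubT ^ N) (commutatorSeries φ ψ) = 0

/-- Translation covariance `[T, φ(z)] = ∂φ(z)` of a field given by its modes. -/
def TranslationCovariant (T : L) (φ : ℤ → L) : Prop :=
  ∀ n, ⁅T, φ n⁆ = formalDeriv φ n

theorem commutatorSeries_sub_left (φ φ' ψ : ℤ → L) :
    commutatorSeries (φ - φ') ψ = commutatorSeries φ ψ - commutatorSeries φ' ψ := by
  ext p q
  exact sub_lie _ _ _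

theorem commutatorSeries_formalDeriv_left (φ ψ : ℤ → L) :
    commutatorSeries (formalDeriv φ) ψ = formalDeriv (commutatorSeries φ ψ) := by
  ext p q
  simp only [commutatorSeries, formalDeriv_apply, neg_lie, zsmul_lie, Pi.neg_apply, Pi.smul_apply]

theorem MutuallyLocal.sub_left {φ φ' ψ : ℤ → L} (h : MutuallyLocal φ ψ)
    (h' : MutuallyLocal φ' ψ) : MutuallyLocal (φ - φ') ψ := by
  obtain ⟨N, hN⟩ := h
  obtain ⟨N', hN'⟩ := h'
  refine ⟨max N N', ?_⟩
  rw [commutatorSeries_sub_left, map_sub, mulZSubT_pow_eq_zero_of_le (le_max_left _ _) hN,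
    mulZSubT_pow_eq_zero_of_le (le_max_right _ _) hN', sub_zero]

theorem MutuallyLocal.formalDeriv_left {φ ψ : ℤ → L} (h : MutuallyLocal φ ψ) :
    MutuallyLocal (formalDeriv φ) ψ := by
  obtain ⟨N, hN⟩ := h
  refine ⟨N + 1, ?_⟩
  rw [commutatorSeries_formalDeriv_left, mulZSubT_pow_succ_formalDeriv_eq_zero hN]

theorem TranslationCovariant.sub {T : L} {φ ψ : ℤ → L} (hφ : TranslationCovariant T φ)
    (hψ : TranslationCovariant T ψ) : TranslationCovariant T (φ - ψ) := fun n => by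
  rw [Pi.sub_apply, lie_sub, hφ, hψ, map_sub, Pi.sub_apply]

theorem TranslationCovariant.map_formalDeriv {T : L} {φ : ℤ → L} (hφ : TranslationCovariant T φ) :
    TranslationCovariant T (formalDeriv φ) := fun n => by
  rw [formalDeriv_apply, lie_neg, lie_zsmul, hφ, formalDeriv_apply (formalDeriv φ)]

end Locality

section Fields

attribute [local instance] LieRing.ofAssociativeRing

variable {R V : Type*} [Semiring R] [AddCommGroup V] [Module R V]

theorem TranslationCovariant.apply_eq_zero [IsAddTorsionFree V] {T : Module.End R V}
    {φ : ℤ → Module.End R V} {v : V} (hφ : TranslationCovariant T φ) (hT : T v = 0)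
    (hv : ∀ n, -1 ≤ n → φ n v = 0) (n : ℤ) : φ n v = 0 := by
  rcases le_total (-1) n with hn | hn
  · exact hv n hn
  · induction n, hn using Int.leInductionDown with
    | base => exact hv _ le_rfl
    | pred n hn ih =>
      have recursion : T (φ n v) - φ n (T v) = -(n • φ (n - 1) v) :=
        LinearMap.congr_fun (hφ n) v
      rw [ih, hT, map_zero, map_zero, sub_zero, zero_eq_neg] at recursion
      exact (IsAddTorsionFree.zsmul_eq_zero_iff.mp recursion).resolve_right (by omega)

theorem TranslationCovariant.apply_eq_apply [IsAddTorsionFree V] {T : Module.End R V}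
    {φ ψ : ℤ → Module.End R V} {v : V} (hφ : TranslationCovariant T φ)
    (hψ : TranslationCovariant T ψ) (hT : T v = 0) (hv : ∀ n, -1 ≤ n → φ n v = ψ n v) (n : ℤ) :
    φ n v = ψ n v :=
  sub_eq_zero.mp <| (hφ.sub hψ).apply_eq_zero hT (fun m hm => sub_eq_zero.mpr (hv m hm)) n

theorem MutuallyLocal.apply_eq_zero {φ ψ : ℤ → Module.End R V} {v : V}
    (hloc : MutuallyLocal φ ψ) (hφ : ∀ n, φ n v = 0) (hψ : ∀ n, 0 ≤ n → ψ n v = 0) (n : ℤ) :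
    φ n (ψ (-1) v) = 0 := by
  obtain ⟨N, hN⟩ := hloc
  have commutator_apply (p q : ℤ) : commutatorSeries φ ψ p q v = φ p (ψ q v) := by
    rw [commutatorSeries, Ring.lie_def, LinearMap.sub_apply, Module.End.mul_apply,
      Module.End.mul_apply, hφ, map_zero, sub_zero]
  have expansion : (mulZSubT ^ N) (commutatorSeries φ ψ) (n - N) (-1) v = 0 := by
    rw [hN]; rfl
  rw [mulZSubT_pow_apply, LinearMap.sum_apply, Finset.sum_eq_single 0] at expansion
  · simpa [commutator_apply] using expansion
  · intro r _ hr
    rw [LinearMap.smul_apply, commutator_apply, hψ _ (by omega), map_zero, smul_zero]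
  · simp

/-- Goddard's uniqueness theorem. -/
theorem eq_of_mutuallyLocal {Y : V → ℤ → Module.End R V} {vac : V} {φ ψ : ℤ → Module.End R V}
    (creation : ∀ n b, 0 ≤ n → Y b n vac = 0) (create_self : ∀ b, Y b (-1) vac = b)
    (hφ : ∀ b, MutuallyLocal φ (Y b)) (hψ : ∀ b, MutuallyLocal ψ (Y b))
    (hvac : ∀ n, φ n vac = ψ n vac) : φ = ψ := by
  ext n b
  have sub_apply := ((hφ b).sub_left (hψ b)).apply_eq_zero (fun m => sub_eq_zero.mpr (hvac m))
    (creation · b) n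
  rw [create_self] at sub_apply
  exact sub_eq_zero.mp sub_apply

theorem mul_T_left_general [IsAddTorsionFree V] {Y : V → ℤ → Module.End R V}
    {T : Module.End R V} {vac : V} (locality : ∀ a b, MutuallyLocal (Y a) (Y b))
    (translation : ∀ a, TranslationCovariant T (Y a)) (T_vac : T vac = 0)
    (creation : ∀ n a, 0 ≤ n → Y a n vac = 0) (create_self : ∀ a, Y a (-1) vac = a) (a : V) :
    Y (T a) = formalDeriv (Y a) := by
  refine eq_of_mutuallyLocal creation create_self (locality (T a))
    (fun b => (locality a b).formalDeriv_left) <|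
    (translation (T a)).apply_eq_apply (translation a).map_formalDeriv T_vac fun n hn => ?_
  have deriv_vac : formalDeriv (Y a) n vac = T (Y a n vac) := by
    rw [← translation a n, Ring.lie_def, LinearMap.sub_apply, Module.End.mul_apply,
      Module.End.mul_apply, T_vac, map_zero, sub_zero]
  rw [deriv_vac]
  obtain rfl | hn : n = -1 ∨ 0 ≤ n := by omega
  · rw [create_self, create_self]
  · rw [creation _ _ hn, creation _ _ hn, map_zero]

end Fields

namespace UniformVertexAlgebra

attribute [local instance] LieRing.ofAssociativeRing

variable {V : Type*} [AddCommGroup V] [Module ℂ V] (A : UniformVertexAlgebra V)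

/-- The field `a(z)` of a state `a`, given by its modes `a(n)`. -/
def field (a : V) : ℤ → Module.End ℂ V := fun n => A.mul n a

theorem mutuallyLocal_field (a b : V) : MutuallyLocal (A.field a) (A.field b) := by
  obtain ⟨N, hN⟩ := A.locality a b
  refine ⟨N, ?_⟩
  ext p q c
  rw [mulZSubT_pow_apply, LinearMap.sum_apply]
  refine Eq.trans (Finset.sum_congr rfl fun r _ => ?_) (hN p q c)
  rw [LinearMap.smul_apply, ← Int.cast_smul_eq_zsmul ℂ]
  push_cast
  rfl

theorem translationCovariant_field (a : V) : TranslationCovariant A.T (A.field a) :=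
  fun n => LinearMap.ext (A.translation n a)

theorem field_T (a : V) : A.field (A.T a) = formalDeriv (A.field a) :=
  have : IsAddTorsionFree V := .of_isTorsionFree ℂ V
  mul_T_left_general A.mutuallyLocal_field A.translationCovariant_field A.T_vac A.creation
    A.create_self a

end UniformVertexAlgebra

/-- `(L₋₁a)(n)b = −n · a(n−1)b`, i.e. the field of `L₋₁a` is the
formal derivative of the field of `a`. -/
theorem mul_T_left {V : Type*} [AddCommGroup V] [Module ℂ V]
    (A : UniformVertexAlgebra V) (a b : V) (n : ℤ) :
    A.mul n (A.T a) b = -(n • A.mul (n - 1) a b) :=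
  LinearMap.congr_fun (congr_fun (A.field_T a) n) b
end

section
/- Let V be a nonzero uniform ℤ-graded vertex algebra with V_n = 0 for all n < k, where k ≤ 0. Call an element a ∈ V positive-saturating if for all r ≥ 0, all b_1,…,b_r ∈ V and all n_1,…,n_r ∈ ℤ, every homogeneous component of degree ≤ 0 of b_1(n_1)⋯b_r(n_r)a is zero. Let I ⊆ V be the linear span of all elements L_{−1}^{m}( b_1(n_1)⋯b_r(n_r) a ) with m ≥ 0, r ≥ 0, b_1,…,b_r ∈ V, n_1,…,n_r ∈ ℤ and a positive-saturating. Then: (1) L_{−1}I ⊆ I; (2) for every c ∈ V, every n ∈ ℤ and every u ∈ I, both c(n)u ∈ I and u(n)c ∈ I; (3) I is contained in the sum of the homogeneous components V_d with d > 0; in particular the vacuum 1 does not lie in I, so V/I ≠ 0. -/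
/-- Iterated application `b_1(n_1)⋯b_r(n_r)a`, the pairs `(b_i, n_i)` given as a list. -/
noncomputable def UniformVertexAlgebra.applyList {V : Type*} [AddCommGroup V] [Module ℂ V]
    (A : UniformVertexAlgebra V) (l : List (V × ℤ)) (a : V) : V :=
  l.foldr (fun p x => A.mul p.2 p.1 x) a

/-- `a` is positive-saturating: every homogeneous component of degree `≤ 0` of any
`b_1(n_1)⋯b_r(n_r)a` vanishes. -/
noncomputable def UniformVertexAlgebra.PosSat {V : Type*} [AddCommGroup V] [Module ℂ V]
    (A : UniformVertexAlgebra V) (a : V) : Prop :=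
  ∀ (l : List (V × ℤ)) (d : ℤ), d ≤ 0 →
    (A.decomposition.decompose' (A.applyList l a)) d = 0

/-- The linear span of all `L₋₁^m (b_1(n_1)⋯b_r(n_r) a)` with `a` positive-saturating. -/
noncomputable def UniformVertexAlgebra.maxPosIdeal {V : Type*} [AddCommGroup V] [Module ℂ V]
    (A : UniformVertexAlgebra V) : Submodule ℂ V :=
  Submodule.span ℂ
    {x : V | ∃ (m : ℕ) (l : List (V × ℤ)) (a : V),
      A.PosSat a ∧ x = (A.T ^ m) (A.applyList l a)}

/-!
The positive-saturating elements already form the ideal. Writing `S` for their set, `S` is the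
largest subspace of `V_{>0}` that is stable under all operators `b(n)`. As `V_{>0}` is stable under
`L₋₁`, and `[L₋₁, b(n)]` is a multiple of `b(n - 1)`, the subspace `S + L₋₁S` is of this kind too,
so `L₋₁S ⊆ S` and the span `I` is just `S`. For `u ∈ S`, covariance shows that every `u(n)1` is a
multiple of some `L₋₁^j u`, and locality at the vacuum expresses `u(n)c` through elements
`c(m)(u(n')1)`, so `S` is a two-sided ideal. Finally `1` is nonzero of degree `0`, so it is not
in `V_{>0}`.
-/

open DirectSum

theorem mem_biSup_iff_decompose_eq_zero {ι R M : Type*} [DecidableEq ι] [Semiring R]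
    [AddCommMonoid M] [Module R M] (ℳ : ι → Submodule R M) [Decomposition ℳ] (p : ι → Prop)
    {x : M} :
    x ∈ (⨆ i, ⨆ _ : p i, ℳ i) ↔ ∀ i, ¬ p i → decompose ℳ x i = 0 := by
  classical
  constructor
  · intro hx i hi
    let π : M →ₗ[R] ℳ i := component R ι (fun j => ℳ j) i ∘ₗ (decomposeLinearEquiv ℳ).toLinearMap
    have hker : (⨆ j, ⨆ _ : p j, ℳ j) ≤ LinearMap.ker π :=
      iSup₂_le fun j hj y hy =>
        Subtype.ext (decompose_of_mem_ne ℳ hy fun hji => hi (hji ▸ hj))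
    exact hker hx
  · intro h
    rw [← sum_support_decompose ℳ x]
    refine sum_mem fun i hi => ?_
    have hpi : p i := by_contra fun hpi => DFinsupp.mem_support_iff.mp hi (h i hpi)
    exact Submodule.mem_iSup_of_mem i (Submodule.mem_iSup_of_mem hpi (decompose ℳ x i).2)

namespace UniformVertexAlgebra

variable {V : Type*} [AddCommGroup V] [Module ℂ V] (A : UniformVertexAlgebra V)

theorem mul_T (n : ℤ) (a c : V) :
    A.mul n a (A.T c) = A.T (A.mul n a c) + n • A.mul (n - 1) a c := by
  rw [← sub_eq_iff_eq_add', ← neg_sub, A.translation, neg_neg]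

theorem T_mul_vac (n : ℤ) (a : V) :
    A.T (A.mul n a A.vac) = -(n • A.mul (n - 1) a A.vac) := by
  simpa only [A.T_vac, map_zero, sub_zero] using A.translation n a A.vac

theorem vac_ne_zero [Nontrivial V] : A.vac ≠ 0 := by
  intro hvac
  obtain ⟨a, ha⟩ := exists_ne (0 : V)
  exact ha (by rw [← A.create_self a, hvac, map_zero])

section Ideal

variable {A} {W : Submodule ℂ V}

theorem applyList_mem (hmul : ∀ (n : ℤ) (c : V), ∀ u ∈ W, A.mul n c u ∈ W) {u : V} (hu : u ∈ W)
    (l : List (V × ℤ)) : A.applyList l u ∈ W := by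
  induction l with
  | nil => exact hu
  | cons p l ih => exact hmul p.2 p.1 _ ih

theorem mul_vac_mem_of_T_mem (hT : ∀ u ∈ W, A.T u ∈ W) {u : V} (hu : u ∈ W) (n : ℤ) :
    A.mul n u A.vac ∈ W := by
  rcases le_or_gt 0 n with hn | hn
  · simp only [A.creation n u hn, zero_mem]
  induction n, Int.le_sub_one_of_lt hn using Int.leInductionDown with
  | base => rwa [zero_sub, A.create_self]
  | pred n hn ih =>
    have hne : (n : ℂ) ≠ 0 := Int.cast_ne_zero.mpr (by omega)
    have hmem := hT _ (ih (by omega))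
    rwa [T_mul_vac, neg_mem_iff, ← Int.cast_smul_eq_zsmul ℂ, W.smul_mem_iff hne] at hmem

theorem mul_eq_sum_of_localityAt {a c : V} {N : ℕ} (hN : A.LocalityAt a c N) (n : ℤ) :
    A.mul n a c = ∑ r ∈ Finset.range (N + 1),
      ((-1 : ℂ) ^ r * (N.choose r : ℂ)) • A.mul (-1 + r) c (A.mul (n - r) a A.vac) := by
  -- As `c(m)1 = 0` for `m ≥ 0`, only the term `r = 0` of the sum of the `a(n - r)(c(r - 1)1)`
  -- survives.
  have hloc := hN (n - N) (-1) A.vac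
  simp only [sub_add_cancel, smul_sub, Finset.sum_sub_distrib, sub_eq_zero] at hloc
  rw [← hloc, Finset.sum_range_succ', Finset.sum_eq_zero]
  · simp [A.create_self]
  · intro r _
    rw [A.creation (-1 + (r + 1 : ℕ)) c (by omega), map_zero, smul_zero]

theorem mul_mem_of_T_mem_of_mul_mem (hT : ∀ u ∈ W, A.T u ∈ W)
    (hmul : ∀ (n : ℤ) (c : V), ∀ u ∈ W, A.mul n c u ∈ W) {u : V} (hu : u ∈ W) (n : ℤ) (c : V) :
    A.mul n u c ∈ W := by
  obtain ⟨N, hN⟩ := A.locality u c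
  rw [mul_eq_sum_of_localityAt hN]
  exact sum_mem fun r _ => W.smul_mem _ (hmul _ _ _ (mul_vac_mem_of_T_mem hT hu _))

end Ideal

/-- The subspace `V_{>0}`, the sum of the homogeneous components of positive degree. -/
def positivePart : Submodule ℂ V := ⨆ d : ℤ, ⨆ _ : 0 < d, A.grading d

theorem mem_positivePart_iff {x : V} :
    x ∈ A.positivePart ↔ ∀ d : ℤ, d ≤ 0 → A.decomposition.decompose' x d = 0 := by
  let _ := A.decomposition
  exact (mem_biSup_iff_decompose_eq_zero A.grading (0 < ·)).trans <|
    forall_congr' fun _ => imp_congr_left not_lt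

theorem T_mem_positivePart {x : V} (hx : x ∈ A.positivePart) : A.T x ∈ A.positivePart := by
  have hle : A.positivePart ≤ A.positivePart.comap A.T :=
    iSup₂_le fun d hd y hy =>
      Submodule.mem_iSup_of_mem (d + 1) (Submodule.mem_iSup_of_mem (by omega) (A.T_mem d y hy))
  exact hle hx

theorem vac_notMem_positivePart [Nontrivial V] : A.vac ∉ A.positivePart := by
  let _ := A.decomposition
  intro hvac
  have hzero : decompose A.grading A.vac 0 = 0 := A.mem_positivePart_iff.mp hvac 0 le_rfl
  apply A.vac_ne_zero
  rw [← decompose_of_mem_same A.grading A.vac_mem, hzero, ZeroMemClass.coe_zero]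

theorem applyList_eq_prod (l : List (V × ℤ)) (a : V) :
    A.applyList l a = (l.map fun p => (A.mul p.2 p.1 : Module.End ℂ V)).prod a := by
  induction l with
  | nil => rfl
  | cons p l ih => exact congrArg (A.mul p.2 p.1) ih

theorem posSat_iff {a : V} : A.PosSat a ↔ ∀ l, A.applyList l a ∈ A.positivePart :=
  forall_congr' fun _ => A.mem_positivePart_iff.symm

/-- The positive-saturating elements as a subspace: the largest subspace of `V_{>0}` that is stable
under all operators `b(n)`, see `le_posSatSubmodule`. -/
def posSatSubmodule : Submodule ℂ V where
  carrier := {a | A.PosSat a}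
  zero_mem' := by simp [posSat_iff, applyList_eq_prod]
  add_mem' ha hb := A.posSat_iff.mpr fun l => by
    simpa only [applyList_eq_prod, map_add] using
      add_mem (A.posSat_iff.mp ha l) (A.posSat_iff.mp hb l)
  smul_mem' t _ ha := A.posSat_iff.mpr fun l => by
    simpa only [applyList_eq_prod, map_smul] using
      Submodule.smul_mem _ t (A.posSat_iff.mp ha l)

theorem posSatSubmodule_le_positivePart : A.posSatSubmodule ≤ A.positivePart :=
  fun _ ha => A.posSat_iff.mp ha []

theorem mul_mem_posSatSubmodule {a : V} (ha : a ∈ A.posSatSubmodule) (n : ℤ) (c : V) :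
    A.mul n c a ∈ A.posSatSubmodule := by
  refine A.posSat_iff.mpr fun l => ?_
  simpa [applyList] using A.posSat_iff.mp ha (l ++ [(c, n)])

theorem le_posSatSubmodule {W : Submodule ℂ V} (hpos : W ≤ A.positivePart)
    (hmul : ∀ (n : ℤ) (c : V), ∀ u ∈ W, A.mul n c u ∈ W) : W ≤ A.posSatSubmodule :=
  fun _ hu => A.posSat_iff.mpr fun l => hpos (applyList_mem hmul hu l)

theorem T_mem_posSatSubmodule {a : V} (ha : a ∈ A.posSatSubmodule) :
    A.T a ∈ A.posSatSubmodule := by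
  let S := A.posSatSubmodule
  suffices h : S ⊔ S.map A.T ≤ S from
    h (Submodule.mem_sup_right (Submodule.mem_map_of_mem ha))
  apply A.le_posSatSubmodule
  · have hS : S ≤ A.positivePart := A.posSatSubmodule_le_positivePart
    exact sup_le hS (Submodule.map_le_iff_le_comap.mpr fun x hx => A.T_mem_positivePart (hS hx))
  · intro n c
    suffices h : S ⊔ S.map A.T ≤ (S ⊔ S.map A.T).comap (A.mul n c) from h
    refine sup_le (fun x hx => Submodule.mem_sup_left (A.mul_mem_posSatSubmodule hx n c))
      (Submodule.map_le_iff_le_comap.mpr fun x hx => ?_)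
    rw [Submodule.mem_comap, Submodule.mem_comap, mul_T]
    exact add_mem
      (Submodule.mem_sup_right (Submodule.mem_map_of_mem (A.mul_mem_posSatSubmodule hx n c)))
      (Submodule.mem_sup_left (zsmul_mem (A.mul_mem_posSatSubmodule hx (n - 1) c) n))

theorem maxPosIdeal_eq_posSatSubmodule : A.maxPosIdeal = A.posSatSubmodule := by
  apply le_antisymm
  · refine Submodule.span_le.mpr ?_
    rintro _ ⟨m, l, a, ha, rfl⟩
    have hT : Set.MapsTo A.T A.posSatSubmodule A.posSatSubmodule :=
      fun _ => A.T_mem_posSatSubmodule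
    rw [Module.End.pow_apply]
    exact hT.iterate m (applyList_mem (fun n c _ hu => A.mul_mem_posSatSubmodule hu n c) ha l)
  · exact fun a ha => Submodule.subset_span ⟨0, [], a, ha, rfl⟩

end UniformVertexAlgebra

theorem maxPosIdeal_properties_general {V : Type*} [AddCommGroup V] [Module ℂ V] [Nontrivial V]
    (A : UniformVertexAlgebra V) :
    (∀ u ∈ A.maxPosIdeal, A.T u ∈ A.maxPosIdeal) ∧
    (∀ (c : V) (n : ℤ), ∀ u ∈ A.maxPosIdeal,
      A.mul n c u ∈ A.maxPosIdeal ∧ A.mul n u c ∈ A.maxPosIdeal) ∧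
    A.maxPosIdeal ≤ (⨆ d : ℤ, ⨆ _ : 0 < d, A.grading d) ∧
    A.vac ∉ A.maxPosIdeal ∧
    Nontrivial (V ⧸ A.maxPosIdeal) := by
  rw [A.maxPosIdeal_eq_posSatSubmodule]
  have hT : ∀ u ∈ A.posSatSubmodule, A.T u ∈ A.posSatSubmodule :=
    fun _ => A.T_mem_posSatSubmodule
  have hmul : ∀ (n : ℤ) (c : V), ∀ u ∈ A.posSatSubmodule, A.mul n c u ∈ A.posSatSubmodule :=
    fun n c _ hu => A.mul_mem_posSatSubmodule hu n c
  have hmul_right : ∀ (n : ℤ) (c : V), ∀ u ∈ A.posSatSubmodule, A.mul n u c ∈ A.posSatSubmodule :=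
    fun n c _ hu => UniformVertexAlgebra.mul_mem_of_T_mem_of_mul_mem hT hmul hu n c
  have hvac : A.vac ∉ A.posSatSubmodule :=
    fun h => A.vac_notMem_positivePart (A.posSatSubmodule_le_positivePart h)
  exact ⟨hT, fun c n u hu => ⟨hmul n c u hu, hmul_right n c u hu⟩,
    A.posSatSubmodule_le_positivePart, hvac,
    Submodule.Quotient.nontrivial_iff.mpr fun htop => hvac (htop ▸ Submodule.mem_top)⟩

/-- for a nonzero `k`-connective uniform vertex algebra (`k ≤ 0`), the span `I`
of all `L₋₁^m(b_1(n_1)⋯b_r(n_r)a)` with `a` positive-saturating satisfies: (1) `L₋₁I ⊆ I`;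
(2) `I` is stable under `c(n)·` and `·(n)c` for all `c, n`; (3) `I` is contained in the sum of
the components `V_d` with `d > 0`; in particular `1 ∉ I`, so `V/I ≠ 0`. -/
theorem maxPosIdeal_properties {V : Type*} [AddCommGroup V] [Module ℂ V] [Nontrivial V]
    (A : UniformVertexAlgebra V) (k : ℤ) (hk : k ≤ 0)
    (hconn : ∀ n : ℤ, n < k → A.grading n = ⊥) :
    (∀ u ∈ A.maxPosIdeal, A.T u ∈ A.maxPosIdeal) ∧
    (∀ (c : V) (n : ℤ), ∀ u ∈ A.maxPosIdeal,
      A.mul n c u ∈ A.maxPosIdeal ∧ A.mul n u c ∈ A.maxPosIdeal) ∧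
    A.maxPosIdeal ≤ (⨆ d : ℤ, ⨆ _ : 0 < d, A.grading d) ∧
    A.vac ∉ A.maxPosIdeal ∧
    Nontrivial (V ⧸ A.maxPosIdeal) :=
  maxPosIdeal_properties_general A
end
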